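/- arXiv:2109.02101 — 3 statements merged into one kernel-verified Lean document; each statement's English description precedes it below -/
import Mathlib

section
/- Let C be a connected filtered k-coalgebra with filtration (C_{≤0}, C_{≤1}, C_{≤2}, …) and unity 1_C. Let e : C → C and f : C → C be k-coalgebra homomorphisms such that e(1_C) = 1_C, f(1_C) = 1_C, Prim C ⊆ Ker(e − f), and f ∘ e = e ∘ f. Let p be a positive integer such that (e − f)(C_{≤p}) = 0. Then for any integer u > p, we have (e − f)^{u−p}(C_{≤u}) ⊆ Prim C, where powers denote composition powers. -/
/-!
Put `g = e - f`, let `π = id - 1_C ε` be the projection killing `1_C`, and let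
`δ = (π ⊗ π) ∘ Δ`, so that `δ x = Δ x - x ⊗ 1 - 1 ⊗ x + ε(x) 1 ⊗ 1`. An element with `ε x = 0` is
primitive as soon as `δ x = 0`. Since `e` and `f` are coalgebra maps fixing `1_C`,
`δ ∘ g = (e ⊗ e - f ⊗ f) ∘ δ = (e ⊗ g + g ⊗ f) ∘ δ`, and the two summands `e ⊗ g` and `g ⊗ f`
commute. The binomial theorem therefore writes `δ (g ^ m x)` as a combination of the terms
`(e ^ j g ^ l ⊗ g ^ j f ^ l) (δ x)` with `j + l = m`.

Because `π` kills `C_{≤0} = k 1_C`, for `x ∈ C_{≤u}` only the components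
`C_{≤i} ⊗ C_{≤u-i}` with `0 < i < u` contribute to `δ x`. Arguing by strong induction on the claim
that `g ^ (n - p + 1)` kills `C_{≤n}` (truncated subtraction), for `m = u - p` every binomial term
vanishes on every such component: one of `l ≥ (i - p) + 1`, `j ≥ (u - i - p) + 1` must hold, which
uses `p > 0`. The step lemma `map_pow_sub_le_primitives` carries this out; since `g` kills
primitive elements, it also feeds the induction.
-/

open TensorProduct

/-- The image of `A ⊗ B` under the canonical map `A ⊗ B → C ⊗ C` obtained by tensoring
the inclusion maps. -/
noncomputable def tmulImage {k C : Type*} [CommRing k] [AddCommGroup C] [Module k C]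
    (A B : Submodule k C) : Submodule k (C ⊗[k] C) :=
  LinearMap.range (TensorProduct.mapIncl A B)

/-- The submodule of primitive elements of `C` (with respect to the unity `one`):
those `x` with `Δ x = x ⊗ one + one ⊗ x`. -/
noncomputable def primitives (k : Type*) (C : Type*) [CommRing k] [AddCommGroup C]
    [Module k C] [Coalgebra k C] (one : C) : Submodule k C :=
  LinearMap.ker (Coalgebra.comul (R := k) - (TensorProduct.mk k C C).flip one
    - TensorProduct.mk k C C one)

section

variable {k C : Type*} [CommRing k] [AddCommGroup C] [Module k C] [Coalgebra k C]

/-- The projection `π = id - one · ε` of `C`, which kills `one` when `ε one = 1`. -/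
noncomputable def augProj (k : Type*) {C : Type*} [CommRing k] [AddCommGroup C] [Module k C]
    [Coalgebra k C] (one : C) : Module.End k C :=
  LinearMap.id - LinearMap.toSpanSingleton k C one ∘ₗ Coalgebra.counit

lemma augProj_apply (one x : C) :
    augProj k one x = x - Coalgebra.counit (R := k) x • one := by
  simp [augProj]

/-- The reduced comultiplication `δ = (π ⊗ π) ∘ Δ`. -/
noncomputable def redComul (k : Type*) {C : Type*} [CommRing k] [AddCommGroup C] [Module k C]
    [Coalgebra k C] (one : C) : C →ₗ[k] C ⊗[k] C :=
  TensorProduct.map (augProj k one) (augProj k one) ∘ₗ Coalgebra.comul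

lemma redComul_apply (one x : C) :
    redComul k one x = Coalgebra.comul (R := k) x - x ⊗ₜ one - one ⊗ₜ x
      + Coalgebra.counit (R := k) x • (one ⊗ₜ[k] one) := by
  set η := LinearMap.toSpanSingleton k C one
  set ε := Coalgebra.counit (R := k) (A := C)
  have h1 : TensorProduct.map LinearMap.id (η ∘ₗ ε) (Coalgebra.comul (R := k) x)
      = x ⊗ₜ one := by
    have : TensorProduct.map LinearMap.id (η ∘ₗ ε) = η.lTensor C ∘ₗ ε.lTensor C := by
      ext; simp
    rw [this, LinearMap.comp_apply, Coalgebra.lTensor_counit_comul]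
    simp [η]
  have h2 : TensorProduct.map (η ∘ₗ ε) LinearMap.id (Coalgebra.comul (R := k) x)
      = one ⊗ₜ x := by
    have : TensorProduct.map (η ∘ₗ ε) LinearMap.id = η.rTensor C ∘ₗ ε.rTensor C := by
      ext; simp
    rw [this, LinearMap.comp_apply, Coalgebra.rTensor_counit_comul]
    simp [η]
  have h3 : TensorProduct.map (η ∘ₗ ε) (η ∘ₗ ε) (Coalgebra.comul (R := k) x)
      = ε x • (one ⊗ₜ[k] one) := by
    have : TensorProduct.map (η ∘ₗ ε) (η ∘ₗ ε)
        = TensorProduct.map (η ∘ₗ ε) η ∘ₗ ε.lTensor C := by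
      ext; simp
    rw [this, LinearMap.comp_apply, Coalgebra.lTensor_counit_comul]
    simp [η, TensorProduct.smul_tmul']
  have h4 : TensorProduct.map (augProj k one) (augProj k one)
      = LinearMap.id - TensorProduct.map LinearMap.id (η ∘ₗ ε)
        - TensorProduct.map (η ∘ₗ ε) LinearMap.id + TensorProduct.map (η ∘ₗ ε) (η ∘ₗ ε) := by
    ext a b
    simp [augProj, η, ε, TensorProduct.sub_tmul, TensorProduct.tmul_sub, smul_sub]
    abel
  rw [redComul, LinearMap.comp_apply, h4]
  simp [h1, h2, h3]

lemma mem_primitives_of_redComul_eq_zero {one x : C} (hε : Coalgebra.counit (R := k) x = 0)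
    (hδ : redComul k one x = 0) : x ∈ primitives k C one := by
  rw [redComul_apply, hε, zero_smul, add_zero] at hδ
  simpa [primitives, LinearMap.mem_ker] using hδ

/-- The reduced comultiplication intertwines `e` with `e ⊗ e`, for a coalgebra endomorphism `e`
fixing `one`. -/
lemma redComul_comp {one : C} {e : Module.End k C}
    (heComul : TensorProduct.map (e : C →ₗ[k] C) (e : C →ₗ[k] C) ∘ₗ Coalgebra.comul (R := k)
      = Coalgebra.comul (R := k) ∘ₗ (e : C →ₗ[k] C))
    (heCounit : Coalgebra.counit (R := k) ∘ₗ (e : C →ₗ[k] C) = Coalgebra.counit (R := k) (A := C))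
    (heOne : e one = one) (x : C) :
    redComul k one (e x) = TensorProduct.map e e (redComul k one x) := by
  have h1 := LinearMap.congr_fun heComul x
  have h2 := LinearMap.congr_fun heCounit x
  simp only [LinearMap.comp_apply] at h1 h2
  simp [redComul_apply, h1, h2, heOne]

/-- If `g = e - f` satisfies `g ^ (i - p + 1) = 0` on `C_{≤i}` for all `i < u` (truncated
subtraction), then `g ^ (u - p)` maps `C_{≤u}` into the primitive elements. -/
lemma map_pow_sub_le_primitives
    (F : ℕ → Submodule k C) (hmono : Monotone F)
    (hcomulF : ∀ n : ℕ, Submodule.map (Coalgebra.comul (R := k) (A := C)) (F n) ≤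
      ∑ i ∈ Finset.range (n + 1), tmulImage (F i) (F (n - i)))
    (hconn : Function.Bijective fun x : F 0 => Coalgebra.counit (R := k) (x : C))
    (oneC : C) (hone : oneC ∈ F 0) (honeCounit : Coalgebra.counit (R := k) oneC = 1)
    (e f : Module.End k C)
    (heComul : TensorProduct.map (e : C →ₗ[k] C) (e : C →ₗ[k] C) ∘ₗ Coalgebra.comul (R := k)
      = Coalgebra.comul (R := k) ∘ₗ (e : C →ₗ[k] C))
    (heCounit : Coalgebra.counit (R := k) ∘ₗ (e : C →ₗ[k] C) = Coalgebra.counit (R := k) (A := C))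
    (hfComul : TensorProduct.map (f : C →ₗ[k] C) (f : C →ₗ[k] C) ∘ₗ Coalgebra.comul (R := k)
      = Coalgebra.comul (R := k) ∘ₗ (f : C →ₗ[k] C))
    (hfCounit : Coalgebra.counit (R := k) ∘ₗ (f : C →ₗ[k] C) = Coalgebra.counit (R := k) (A := C))
    (heOne : e oneC = oneC) (hfOne : f oneC = oneC)
    (hcomm : f * e = e * f)
    (p : ℕ) (hp : 0 < p) (u : ℕ) (hu : p < u)
    (ih : ∀ i < u, ∀ x ∈ F i, ((e - f) ^ (i - p + 1)) x = 0) :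
    ∀ x ∈ F u, ((e - f) ^ (u - p)) x ∈ primitives k C oneC := by
  set g := e - f with hg
  have hfe : Commute f e := hcomm
  have hge : Commute g e := (Commute.refl e).sub_left hfe
  have hgf : Commute g f := hfe.symm.sub_left (Commute.refl f)
  set A : Module.End k (C ⊗[k] C) := TensorProduct.map e g with hA
  set B : Module.End k (C ⊗[k] C) := TensorProduct.map g f with hB
  have hAB : Commute A B := by
    change A * B = B * A
    rw [hA, hB, ← TensorProduct.map_mul, ← TensorProduct.map_mul, hge.eq, hgf.eq]
  have hstep : ∀ x, redComul k oneC (g x) = (A + B) (redComul k oneC x) := by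
    intro x
    have h : A + B = TensorProduct.map e e - TensorProduct.map f f := by
      ext a b
      simp [hA, hB, hg, TensorProduct.sub_tmul, TensorProduct.tmul_sub]
    rw [h, hg, LinearMap.sub_apply, map_sub, redComul_comp heComul heCounit heOne,
      redComul_comp hfComul hfCounit hfOne, LinearMap.sub_apply]
  have hpow : ∀ m x, redComul k oneC ((g ^ m) x) = ((A + B) ^ m) (redComul k oneC x) := by
    intro m
    induction m with
    | zero => simp
    | succ m ihm =>
      intro x
      rw [pow_succ', pow_succ', Module.End.mul_apply, Module.End.mul_apply, hstep, ihm]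
  have hπ0 : ∀ a ∈ F 0, augProj k oneC a = 0 := by
    intro a ha
    have h := @hconn.1 ⟨a, ha⟩ ⟨Coalgebra.counit (R := k) a • oneC, (F 0).smul_mem _ hone⟩
      (by simp [honeCounit])
    rw [augProj_apply, sub_eq_zero]
    exact congrArg Subtype.val h
  have hπF : ∀ i, ∀ a ∈ F i, augProj k oneC a ∈ F i := by
    intro i a ha
    rw [augProj_apply]
    exact (F i).sub_mem ha ((F i).smul_mem _ (hmono (Nat.zero_le i) hone))
  have hkill : ∀ i < u, ∀ m, i - p + 1 ≤ m → ∀ x ∈ F i, (g ^ m) x = 0 := by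
    intro i hi m hm x hx
    rw [← Nat.sub_add_cancel hm, pow_add, Module.End.mul_apply, ih i hi x hx, map_zero]
  have hpure : ∀ i ≤ u, ∀ a ∈ F i, ∀ b ∈ F (u - i),
      ((A + B) ^ (u - p)) (augProj k oneC a ⊗ₜ augProj k oneC b) = 0 := by
    intro i hi a ha b hb
    rcases Nat.eq_zero_or_pos i with rfl | hi0
    · simp [hπ0 a ha]
    rcases hi.eq_or_lt with rfl | hiu
    · rw [Nat.sub_self] at hb
      simp [hπ0 b hb]
    have ha' := hπF _ a ha
    have hb' := hπF _ b hb
    rw [hAB.add_pow', LinearMap.sum_apply]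
    refine Finset.sum_eq_zero fun q hq => ?_
    obtain ⟨j, l⟩ := q
    have hjl : j + l = u - p := by simpa using hq
    have hterm : (A ^ j * B ^ l) (augProj k oneC a ⊗ₜ augProj k oneC b) = 0 := by
      rw [hA, hB, TensorProduct.map_pow, TensorProduct.map_pow, ← TensorProduct.map_mul,
        TensorProduct.map_tmul, (hgf.pow_pow j l).eq]
      -- Otherwise `u - p = j + l ≤ (i - p) + (u - i - p)`, impossible as `0 < p` and `0 < i < u`.
      have hcases : i - p + 1 ≤ l ∨ (u - i) - p + 1 ≤ j := by omega
      rcases hcases with h | h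
      · rw [Module.End.mul_apply, hkill i hiu l h _ ha', map_zero, TensorProduct.zero_tmul]
      · rw [Module.End.mul_apply (f ^ l), hkill (u - i) (by omega) j h _ hb', map_zero,
          TensorProduct.tmul_zero]
    rw [LinearMap.smul_apply, hterm, smul_zero]
  have hδ : ∀ x ∈ F u, ((A + B) ^ (u - p)) (redComul k oneC x) = 0 := by
    intro x hx
    have hle : ∑ i ∈ Finset.range (u + 1), tmulImage (F i) (F (u - i)) ≤
        LinearMap.ker (((A + B) ^ (u - p)) ∘ₗ
          TensorProduct.map (augProj k oneC) (augProj k oneC)) := by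
      refine Finset.sum_induction _ (· ≤ _) (fun _ _ => sup_le) bot_le fun i hi => ?_
      rw [tmulImage, LinearMap.range_le_ker_iff]
      refine TensorProduct.ext' fun a b => ?_
      exact hpure i (by simpa [Nat.lt_succ_iff] using hi) a a.2 b b.2
    exact hle (hcomulF u (Submodule.mem_map_of_mem hx))
  intro x hx
  refine mem_primitives_of_redComul_eq_zero ?_ ((hpow _ _).trans (hδ x hx))
  -- `ε ∘ g = 0`, and the exponent `u - p` is positive.
  obtain ⟨m, hm⟩ : ∃ m, u - p = m + 1 := ⟨u - p - 1, by omega⟩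
  have h1 := LinearMap.congr_fun heCounit ((g ^ m) x)
  have h2 := LinearMap.congr_fun hfCounit ((g ^ m) x)
  simp only [LinearMap.comp_apply] at h1 h2
  rw [hm, pow_succ', Module.End.mul_apply]
  nth_rewrite 1 [hg]
  rw [LinearMap.sub_apply, map_sub, h1, h2, sub_self]

end

theorem stmt_11 {k C : Type*} [CommRing k] [AddCommGroup C] [Module k C] [Coalgebra k C]
    (F : ℕ → Submodule k C)
    (hmono : Monotone F)
    (hunion : ∀ x : C, ∃ n, x ∈ F n)
    (hcomulF : ∀ n : ℕ, Submodule.map (Coalgebra.comul (R := k) (A := C)) (F n) ≤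
      ∑ i ∈ Finset.range (n + 1), tmulImage (F i) (F (n - i)))
    (hconn : Function.Bijective fun x : F 0 => Coalgebra.counit (R := k) (x : C))
    (oneC : C) (hone : oneC ∈ F 0) (honeCounit : Coalgebra.counit (R := k) oneC = 1)
    (e f : Module.End k C)
    (heComul : TensorProduct.map (e : C →ₗ[k] C) (e : C →ₗ[k] C) ∘ₗ Coalgebra.comul (R := k)
      = Coalgebra.comul (R := k) ∘ₗ (e : C →ₗ[k] C))
    (heCounit : Coalgebra.counit (R := k) ∘ₗ (e : C →ₗ[k] C) = Coalgebra.counit (R := k) (A := C))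
    (hfComul : TensorProduct.map (f : C →ₗ[k] C) (f : C →ₗ[k] C) ∘ₗ Coalgebra.comul (R := k)
      = Coalgebra.comul (R := k) ∘ₗ (f : C →ₗ[k] C))
    (hfCounit : Coalgebra.counit (R := k) ∘ₗ (f : C →ₗ[k] C) = Coalgebra.counit (R := k) (A := C))
    (heOne : e oneC = oneC) (hfOne : f oneC = oneC)
    (hPrim : primitives k C oneC ≤ LinearMap.ker ((e - f : Module.End k C) : C →ₗ[k] C))
    (hcomm : f * e = e * f)
    (p : ℕ) (hp : 0 < p)
    (hann : Submodule.map ((e - f : Module.End k C) : C →ₗ[k] C) (F p) = ⊥)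
    (u : ℕ) (hu : u > p) :
    Submodule.map (((e - f) ^ (u - p) : Module.End k C) : C →ₗ[k] C) (F u)
      ≤ primitives k C oneC := by
  have hstep := map_pow_sub_le_primitives F hmono hcomulF hconn oneC hone honeCounit e f heComul
    heCounit hfComul hfCounit heOne hfOne hcomm p hp
  have hkill : ∀ n, ∀ x ∈ F n, ((e - f) ^ (n - p + 1)) x = 0 := by
    intro n
    induction n using Nat.strong_induction_on with
    | _ n ih =>
      intro x hx
      rcases le_or_gt n p with hn | hn
      · have hmem : (e - f) x ∈ Submodule.map (e - f) (F p) :=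
          Submodule.mem_map_of_mem (hmono hn hx)
        rw [hann, Submodule.mem_bot] at hmem
        simpa [Nat.sub_eq_zero_of_le hn] using hmem
      · rw [pow_succ', Module.End.mul_apply]
        exact hPrim (hstep n hn ih x hx)
  rintro _ ⟨x, hx, rfl⟩
  exact hstep u hu (fun i _ => hkill i) x hx
end

section
/- Let C be a connected filtered k-coalgebra with filtration (C_{≤0}, C_{≤1}, C_{≤2}, …) and unity 1_C. Let e : C → C and f : C → C be k-coalgebra homomorphisms such that e(1_C) = 1_C, f(1_C) = 1_C, Prim C ⊆ Ker(e − f), and f ∘ e = e ∘ f. Let p be a positive integer such that (e − f)(C_{≤p}) = 0. Then for any integer u ≥ p, we have (e − f)^{u−p+1}(C_{≤u}) = 0, where powers denote composition powers. -/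
/-!
Put `g = e - f`. It commutes with `e` and `f`, kills the unity and has image in the kernel of the
counit. Since `e ⊗ e - f ⊗ f = g ⊗ e + f ⊗ g =: T`, one has `Δ ∘ g ^ m = T ^ m ∘ Δ`.

The proof is a strong induction on `u`, the case `u = p` being the hypothesis. For `u > p` and
`x ∈ F u`, put `m = u - p`. The coproduct of `x` is a sum of parts in `F i ⊗ F (u - i)`. For
`0 < i < u`, `T ^ m` kills such a part: it expands into terms applying `g ^ a` to the first factor
and `g ^ b` to the second with `a + b = m`, and, by the induction hypothesis, one of the two is
zero (`twist_pow_tmul_eq_zero`). The extreme parts `y' ⊗ 1` and `1 ⊗ y''` are sent to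
`g ^ m y' ⊗ 1` and `1 ⊗ g ^ m y''`. Hence `Δ (g ^ m x) = g ^ m y' ⊗ 1 + 1 ⊗ g ^ m y''`, and applying
the counit to either factor shows that `g ^ m x` is primitive (`mem_primitives_of_comul_eq`);
therefore `g` kills it.
-/

open TensorProduct

section Twist

variable {k C : Type*} [CommRing k] [AddCommGroup C] [Module k C]

/-- The endomorphism `(e - f) ⊗ e + f ⊗ (e - f)` of `C ⊗ C`, which equals `e ⊗ e - f ⊗ f`. -/
noncomputable def twist (e f : Module.End k C) : Module.End k (C ⊗[k] C) :=
  TensorProduct.map (e - f) e + TensorProduct.map f (e - f)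

theorem twist_tmul (e f : Module.End k C) (a b : C) :
    twist e f (a ⊗ₜ b) = (e - f) a ⊗ₜ e b + f a ⊗ₜ (e - f) b := by
  simp [twist]

theorem twist_eq (e f : Module.End k C) :
    twist e f = TensorProduct.map e e - TensorProduct.map f f := by
  refine TensorProduct.ext' fun a b => ?_
  simp [twist, TensorProduct.sub_tmul, TensorProduct.tmul_sub]

theorem twist_pow_tmul_one {e f : Module.End k C} {o : C} (he : e o = o) (hf : f o = o)
    (m : ℕ) (a : C) : (twist e f ^ m) (a ⊗ₜ o) = ((e - f) ^ m) a ⊗ₜ o := by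
  induction m generalizing a with
  | zero => simp
  | succ m ih =>
    rw [pow_succ, Module.End.mul_apply, twist_tmul, pow_succ, Module.End.mul_apply, he,
      LinearMap.sub_apply e f o, he, hf, sub_self, TensorProduct.tmul_zero, add_zero, ih]

theorem twist_pow_one_tmul {e f : Module.End k C} {o : C} (he : e o = o) (hf : f o = o)
    (m : ℕ) (b : C) : (twist e f ^ m) (o ⊗ₜ b) = o ⊗ₜ ((e - f) ^ m) b := by
  induction m generalizing b with
  | zero => simp
  | succ m ih =>
    rw [pow_succ, Module.End.mul_apply, twist_tmul, pow_succ, Module.End.mul_apply, hf,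
      LinearMap.sub_apply e f o, he, hf, sub_self, TensorProduct.zero_tmul, zero_add, ih]

/-- In the expansion of `twist e f ^ m`, every term applies `(e - f) ^ i` to the left factor and
`(e - f) ^ j` to the right factor for some `i + j = m`, up to commuting powers of `e` and `f`. -/
theorem twist_pow_tmul_eq_zero {e f : Module.End k C} (hcomm : Commute f e) (m : ℕ) (a b : C)
    (h : ∀ i j, i + j = m → ((e - f) ^ i) a = 0 ∨ ((e - f) ^ j) b = 0) :
    (twist e f ^ m) (a ⊗ₜ b) = 0 := by
  induction m generalizing a b with
  | zero =>
    rcases h 0 0 rfl with h | h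
    · have : a = 0 := by simpa using h
      simp [this]
    · have : b = 0 := by simpa using h
      simp [this]
  | succ m ih =>
    rw [pow_succ, Module.End.mul_apply, twist_tmul, map_add, ih, ih, add_zero]
    · intro i j hij
      have hf : ((e - f) ^ i) (f a) = f (((e - f) ^ i) a) :=
        LinearMap.congr_fun (((hcomm.symm.sub_left (Commute.refl f)).pow_left i).eq) a
      rw [hf, ← Module.End.mul_apply ((e - f) ^ j), ← pow_succ]
      rcases h i (j + 1) (by omega) with h | h
      · left; rw [h, map_zero]
      · right; exact h
    · intro i j hij
      have he : ((e - f) ^ j) (e b) = e (((e - f) ^ j) b) :=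
        LinearMap.congr_fun ((((Commute.refl e).sub_left hcomm).pow_left j).eq) b
      rw [he, ← Module.End.mul_apply ((e - f) ^ i), ← pow_succ]
      rcases h (i + 1) j (by omega) with h | h
      · left; exact h
      · right; rw [h, map_zero]

variable [Coalgebra k C]

theorem comul_sub_pow {e f : Module.End k C}
    (he : TensorProduct.map e e ∘ₗ Coalgebra.comul (R := k) = Coalgebra.comul (R := k) ∘ₗ e)
    (hf : TensorProduct.map f f ∘ₗ Coalgebra.comul (R := k) = Coalgebra.comul (R := k) ∘ₗ f)
    (m : ℕ) (x : C) :
    Coalgebra.comul (R := k) (((e - f) ^ m) x) = (twist e f ^ m) (Coalgebra.comul (R := k) x) := by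
  induction m generalizing x with
  | zero => simp
  | succ m ih =>
    have h1 := LinearMap.congr_fun he x
    have h2 := LinearMap.congr_fun hf x
    simp only [LinearMap.comp_apply] at h1 h2
    rw [pow_succ, Module.End.mul_apply, ih, pow_succ, Module.End.mul_apply, twist_eq,
      LinearMap.sub_apply, LinearMap.sub_apply, map_sub (Coalgebra.comul (R := k)), h1, h2]

/-- The counit axioms force `y' = y = y''`. -/
theorem mem_primitives_of_comul_eq {o y y' y'' : C} (ho : Coalgebra.counit (R := k) o = 1)
    (h' : Coalgebra.counit (R := k) y' = 0) (h'' : Coalgebra.counit (R := k) y'' = 0)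
    (h : Coalgebra.comul (R := k) y = y' ⊗ₜ o + o ⊗ₜ y'') : y ∈ primitives k C o := by
  have hl := Coalgebra.rTensor_counit_comul (R := k) y
  have hr := Coalgebra.lTensor_counit_comul (R := k) y
  rw [h] at hl hr
  simp only [map_add, LinearMap.rTensor_tmul, LinearMap.lTensor_tmul, ho, h', h'',
    TensorProduct.zero_tmul, TensorProduct.tmul_zero, zero_add, add_zero] at hl hr
  have e1 : y'' = y := by simpa using congrArg (TensorProduct.lid k C) hl
  have e2 : y' = y := by simpa using congrArg (TensorProduct.rid k C) hr
  subst e1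
  subst e2
  simp [primitives, h]

end Twist

theorem stmt_12 {k C : Type*} [CommRing k] [AddCommGroup C] [Module k C] [Coalgebra k C]
    (F : ℕ → Submodule k C)
    (hmono : Monotone F)
    (hunion : ∀ x : C, ∃ n, x ∈ F n)
    (hcomulF : ∀ n : ℕ, Submodule.map (Coalgebra.comul (R := k) (A := C)) (F n) ≤
      ∑ i ∈ Finset.range (n + 1), tmulImage (F i) (F (n - i)))
    (hconn : Function.Bijective fun x : F 0 => Coalgebra.counit (R := k) (x : C))
    (oneC : C) (hone : oneC ∈ F 0) (honeCounit : Coalgebra.counit (R := k) oneC = 1)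
    (e f : Module.End k C)
    (heComul : TensorProduct.map (e : C →ₗ[k] C) (e : C →ₗ[k] C) ∘ₗ Coalgebra.comul (R := k)
      = Coalgebra.comul (R := k) ∘ₗ (e : C →ₗ[k] C))
    (heCounit : Coalgebra.counit (R := k) ∘ₗ (e : C →ₗ[k] C) = Coalgebra.counit (R := k) (A := C))
    (hfComul : TensorProduct.map (f : C →ₗ[k] C) (f : C →ₗ[k] C) ∘ₗ Coalgebra.comul (R := k)
      = Coalgebra.comul (R := k) ∘ₗ (f : C →ₗ[k] C))
    (hfCounit : Coalgebra.counit (R := k) ∘ₗ (f : C →ₗ[k] C) = Coalgebra.counit (R := k) (A := C))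
    (heOne : e oneC = oneC) (hfOne : f oneC = oneC)
    (hPrim : primitives k C oneC ≤ LinearMap.ker ((e - f : Module.End k C) : C →ₗ[k] C))
    (hcomm : f * e = e * f)
    (p : ℕ) (hp : 0 < p)
    (hann : Submodule.map ((e - f : Module.End k C) : C →ₗ[k] C) (F p) = ⊥)
    (u : ℕ) (hu : u ≥ p) :
    Submodule.map (((e - f) ^ (u - p + 1) : Module.End k C) : C →ₗ[k] C) (F u) = ⊥ := by
  have hsub : ∀ x ∈ F u, ((e - f) ^ (u - p + 1)) x = 0 := by
    induction u using Nat.strong_induction_on with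
    | _ u ih =>
    intro x hx
    have hFp : ∀ z ∈ F p, (e - f) z = 0 := fun z hz =>
      (Submodule.mem_bot k).1 (hann ▸ Submodule.mem_map_of_mem hz)
    rcases hu.eq_or_lt with rfl | hlt
    · simpa using hFp x hx
    -- the induction hypothesis, with the filtration steps below `p` included
    have hkill : ∀ i a, i < u → i - p < a → ∀ z ∈ F i, ((e - f) ^ a) z = 0 := by
      intro i a hi ha z hz
      have hz' : z ∈ F (max i p) := hmono (le_max_left _ _) hz
      have h0 := ih (max i p) (by omega) (le_max_right _ _) z hz'
      obtain ⟨c, rfl⟩ : ∃ c, a = c + (max i p - p + 1) :=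
        ⟨a - (max i p - p + 1), by omega⟩
      rw [pow_add, Module.End.mul_apply, h0, map_zero]
    have hF0 : ∀ z ∈ F 0, z = Coalgebra.counit (R := k) z • oneC := by
      intro z hz
      have := @hconn.1 ⟨z, hz⟩ ⟨Coalgebra.counit (R := k) z • oneC, (F 0).smul_mem _ hone⟩
        (by simp [honeCounit])
      exact congrArg Subtype.val this
    obtain ⟨m, rfl⟩ : ∃ m, u = p + m := ⟨u - p, by omega⟩
    rw [Nat.add_sub_cancel_left]
    let S : Submodule k (C ⊗[k] C) :=
      LinearMap.range ((TensorProduct.mk k C C).flip oneC ∘ₗ ((e - f) ^ m : Module.End k C)) ⊔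
      LinearMap.range (TensorProduct.mk k C C oneC ∘ₗ ((e - f) ^ m : Module.End k C))
    have hle : ∑ i ∈ Finset.range (p + m + 1), tmulImage (F i) (F (p + m - i)) ≤
        S.comap (twist e f ^ m) := by
      refine Finset.sum_induction _ (fun N => N ≤ S.comap (twist e f ^ m))
        (fun A B hA hB => sup_le hA hB) bot_le ?_
      rintro i hi _ ⟨t, rfl⟩
      have hi' : i ≤ p + m := Nat.lt_succ_iff.1 (Finset.mem_range.1 hi)
      induction t with
      | zero => simp
      | add s t hs ht => rw [map_add]; exact Submodule.add_mem _ hs ht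
      | tmul a b =>
        obtain ⟨a, ha⟩ := a
        obtain ⟨b, hb⟩ := b
        simp only [TensorProduct.mapIncl, TensorProduct.map_tmul, Submodule.subtype_apply,
          Submodule.mem_comap]
        rcases Nat.eq_zero_or_pos i with rfl | hipos
        · rw [hF0 a ha, TensorProduct.smul_tmul, twist_pow_one_tmul heOne hfOne]
          exact Submodule.mem_sup_right ⟨_, rfl⟩
        rcases hi'.eq_or_lt with rfl | hilt
        · rw [Nat.sub_self] at hb
          rw [hF0 b hb, ← TensorProduct.smul_tmul, twist_pow_tmul_one heOne hfOne]
          exact Submodule.mem_sup_left ⟨_, rfl⟩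
        · rw [twist_pow_tmul_eq_zero hcomm]
          · exact S.zero_mem
          · intro c d hcd
            by_cases hc : i - p < c
            · exact Or.inl (hkill i c hilt hc a ha)
            · exact Or.inr (hkill (p + m - i) d (by omega) (by omega) b hb)
    have hmem := hle (hcomulF _ (Submodule.mem_map_of_mem hx))
    rw [Submodule.mem_comap, ← comul_sub_pow heComul hfComul] at hmem
    obtain ⟨_, ⟨y', rfl⟩, _, ⟨y'', rfl⟩, hy⟩ := Submodule.mem_sup.1 hmem
    have hcounit : ∀ z, Coalgebra.counit (R := k) (((e - f) ^ m) z) = 0 := by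
      intro z
      obtain ⟨l, rfl⟩ : ∃ l, m = l + 1 := ⟨m - 1, by omega⟩
      have h1 := LinearMap.congr_fun heCounit (((e - f) ^ l) z)
      have h2 := LinearMap.congr_fun hfCounit (((e - f) ^ l) z)
      simp only [LinearMap.comp_apply] at h1 h2
      rw [pow_succ', Module.End.mul_apply, LinearMap.sub_apply, map_sub, h1, h2, sub_self]
    rw [pow_succ', Module.End.mul_apply]
    exact hPrim (mem_primitives_of_comul_eq honeCounit (hcounit y') (hcounit y'') hy.symm)
  rw [eq_bot_iff]
  rintro _ ⟨x, hx, rfl⟩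
  exact (Submodule.mem_bot k).2 (hsub x hx)
end

section
/- Let C be a connected filtered k-coalgebra with filtration (C_{≤0}, C_{≤1}, C_{≤2}, …) and unity 1_C. Let e : C → C and f : C → C be k-coalgebra homomorphisms such that e(1_C) = 1_C, f(1_C) = 1_C, Prim C ⊆ Ker(e − f), and f ∘ e = e ∘ f. Then: (a) for any integer u > 1, we have (e − f)^{u−1}(C_{≤u}) ⊆ Prim C; (b) for any positive integer u, we have (e − f)^{u}(C_{≤u}) = 0. Here powers denote composition powers. -/
/-!
Write `g = e - f` and let `π x = x - ε(x) 1` be the projection onto `ker ε`. The reduced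
comultiplication `δ = (π ⊗ π) ∘ Δ` satisfies `δ x = Δ x - x ⊗ 1 - 1 ⊗ x + ε(x) 1 ⊗ 1`
(`map_projAug_comul`), so on `ker ε` its kernel consists of the primitive elements. Since `π`
kills `C_{≤0}` and preserves every `C_{≤i}`, the tensor `δ x` for `x ∈ C_{≤u}` is a sum of
tensors in `C_{≤i} ⊗ C_{≤u-i}` with `0 < i < u`.

As `e` and `f` are coalgebra endomorphisms fixing `1`, they commute with `π`, whence
`δ ∘ g = (e ⊗ e - f ⊗ f) ∘ δ = (g ⊗ e + f ⊗ g) ∘ δ`. The maps `g ⊗ e` and `f ⊗ g` commute, so the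
binomial theorem expands `(g ⊗ e + f ⊗ g) ^ (u - 1)` into multiples of
`(g ^ p * f ^ q) ⊗ (e ^ p * g ^ q)` with `p + q = u - 1`. On `C_{≤i} ⊗ C_{≤u-i}` either `i ≤ p`
or `u - i ≤ q`, so by strong induction on `u` each such term vanishes (`pow_tensor_eq_zero`).
Thus `δ (g ^ (u - 1) x) = 0` for `x ∈ C_{≤u}`. Consequently `π (g ^ (u - 1) x)` is primitive, and
applying `g`, which kills `1` and all primitives, gives `g ^ u x = 0`.
-/

open TensorProduct

section Helpers

variable {k C : Type*} [CommRing k] [AddCommGroup C] [Module k C]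

/-- If `g ^ a` kills `x`, `g ^ b` kills `y` and `a + b ≤ m + 1`, then `(g ⊗ e + f ⊗ g) ^ m` kills
`x ⊗ y`: every term of the binomial expansion has enough factors `g` on one of the two sides. -/
lemma pow_tensor_eq_zero (e f g : Module.End k C) (hge : Commute g e) (hgf : Commute g f)
    {a b m : ℕ} (hm : a + b ≤ m + 1) {x y : C} (hx : (g ^ a) x = 0) (hy : (g ^ b) y = 0) :
    ((TensorProduct.map g e + TensorProduct.map f g : Module.End k (C ⊗[k] C)) ^ m)
      (x ⊗ₜ[k] y) = 0 := by
  have hc : Commute (TensorProduct.map g e : Module.End k (C ⊗[k] C))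
      (TensorProduct.map f g) := by
    change _ * _ = _ * _
    rw [← TensorProduct.map_mul, ← TensorProduct.map_mul, hgf.eq, hge.eq]
  have kill : ∀ {n p : ℕ} {z : C}, n ≤ p → (g ^ n) z = 0 → (g ^ p) z = 0 := by
    intro n p z hnp hz
    rw [← Nat.sub_add_cancel hnp, pow_add, Module.End.mul_apply, hz, map_zero]
  rw [hc.add_pow, LinearMap.sum_apply]
  refine Finset.sum_eq_zero fun p hp => ?_
  rw [TensorProduct.map_pow, TensorProduct.map_pow, ← TensorProduct.map_mul,
    (Nat.cast_commute _ _).symm.eq, Module.End.mul_apply, TensorProduct.map_tmul]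
  have hp' : p ≤ m := by simpa [Nat.lt_succ_iff] using hp
  rcases (show a ≤ p ∨ b ≤ m - p by omega) with h | h
  · rw [(hgf.pow_pow p (m - p)).eq, Module.End.mul_apply, kill h hx, map_zero,
      TensorProduct.zero_tmul, map_zero]
  · rw [Module.End.mul_apply (e ^ p), kill h hy, map_zero, TensorProduct.tmul_zero, map_zero]

variable [Coalgebra k C]

/-- The projection `x ↦ x - ε(x) one`, which maps onto the kernel of the counit when
`ε(one) = 1`. -/
noncomputable def projAug (one : C) : Module.End k C :=
  LinearMap.id - (Coalgebra.counit (R := k) (A := C)).smulRight one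

lemma projAug_apply (one x : C) :
    projAug (k := k) one x = x - Coalgebra.counit (R := k) x • one := rfl

lemma map_projAug_comul (one x : C) :
    TensorProduct.map (projAug (k := k) one) (projAug (k := k) one) (Coalgebra.comul (R := k) x)
      = Coalgebra.comul (R := k) x - x ⊗ₜ[k] one - one ⊗ₜ[k] x
        + Coalgebra.counit (R := k) x • (one ⊗ₜ[k] one) := by
  let R := Coalgebra.Repr.arbitrary k x
  have h1 := Coalgebra.sum_counit_tmul_eq R
  have h2 := Coalgebra.sum_tmul_counit_eq R
  have h1' : ∑ i ∈ R.index, Coalgebra.counit (R := k) (R.left i) • R.right i = x := by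
    simpa only [map_sum, TensorProduct.lid_tmul, one_smul] using congrArg (TensorProduct.lid k C) h1
  have h2' : ∑ i ∈ R.index, Coalgebra.counit (R := k) (R.right i) • R.left i = x := by
    simpa only [map_sum, TensorProduct.rid_tmul, one_smul] using congrArg (TensorProduct.rid k C) h2
  have h3 : Coalgebra.counit (R := k) x = ∑ i ∈ R.index,
      Coalgebra.counit (R := k) (R.left i) * Coalgebra.counit (R := k) (R.right i) := by
    conv_lhs => rw [← h1']
    simp
  have key : ∀ a b : C, projAug (k := k) one a ⊗ₜ[k] projAug (k := k) one b
      = a ⊗ₜ[k] b - (Coalgebra.counit (R := k) b • a) ⊗ₜ[k] one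
        - one ⊗ₜ[k] (Coalgebra.counit (R := k) a • b)
        + (Coalgebra.counit (R := k) a * Coalgebra.counit (R := k) b) • (one ⊗ₜ[k] one) := by
    intro a b
    simp only [projAug_apply, TensorProduct.sub_tmul, TensorProduct.tmul_sub,
      ← TensorProduct.smul_tmul', TensorProduct.tmul_smul, mul_smul, smul_sub]
    rw [smul_comm (Coalgebra.counit (R := k) b)]
    abel
  rw [← R.eq]
  simp only [map_sum, TensorProduct.map_tmul, key, Finset.sum_add_distrib,
    Finset.sum_sub_distrib]
  rw [← TensorProduct.sum_tmul, ← TensorProduct.tmul_sum, ← Finset.sum_smul, h1', h2', ← h3]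

lemma mem_primitives_iff (one x : C) : x ∈ primitives k C one ↔
    Coalgebra.comul (R := k) x - x ⊗ₜ[k] one - one ⊗ₜ[k] x = 0 := Iff.rfl

/-- A coalgebra endomorphism fixing `one` commutes with the reduced comultiplication. -/
lemma map_projAug_comul_hom (one : C) (h : Module.End k C)
    (hComul : TensorProduct.map h h ∘ₗ Coalgebra.comul (R := k) = Coalgebra.comul (R := k) ∘ₗ h)
    (hCounit : Coalgebra.counit (R := k) ∘ₗ h = Coalgebra.counit (R := k) (A := C))
    (hOne : h one = one) (x : C) :
    TensorProduct.map (projAug (k := k) one) (projAug (k := k) one)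
        (Coalgebra.comul (R := k) (h x))
      = TensorProduct.map h h (TensorProduct.map (projAug (k := k) one) (projAug (k := k) one)
        (Coalgebra.comul (R := k) x)) := by
  have h1 : Coalgebra.comul (R := k) (h x) = TensorProduct.map h h (Coalgebra.comul (R := k) x) :=
    (LinearMap.congr_fun hComul x).symm
  have h2 : Coalgebra.counit (R := k) (h x) = Coalgebra.counit (R := k) x :=
    LinearMap.congr_fun hCounit x
  rw [map_projAug_comul, map_projAug_comul]
  simp [h1, h2, hOne]

end Helpers

theorem stmt_13 {k C : Type*} [CommRing k] [AddCommGroup C] [Module k C] [Coalgebra k C]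
    (F : ℕ → Submodule k C)
    (hmono : Monotone F)
    (hunion : ∀ x : C, ∃ n, x ∈ F n)
    (hcomulF : ∀ n : ℕ, Submodule.map (Coalgebra.comul (R := k) (A := C)) (F n) ≤
      ∑ i ∈ Finset.range (n + 1), tmulImage (F i) (F (n - i)))
    (hconn : Function.Bijective fun x : F 0 => Coalgebra.counit (R := k) (x : C))
    (oneC : C) (hone : oneC ∈ F 0) (honeCounit : Coalgebra.counit (R := k) oneC = 1)
    (e f : Module.End k C)
    (heComul : TensorProduct.map (e : C →ₗ[k] C) (e : C →ₗ[k] C) ∘ₗ Coalgebra.comul (R := k)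
      = Coalgebra.comul (R := k) ∘ₗ (e : C →ₗ[k] C))
    (heCounit : Coalgebra.counit (R := k) ∘ₗ (e : C →ₗ[k] C) = Coalgebra.counit (R := k) (A := C))
    (hfComul : TensorProduct.map (f : C →ₗ[k] C) (f : C →ₗ[k] C) ∘ₗ Coalgebra.comul (R := k)
      = Coalgebra.comul (R := k) ∘ₗ (f : C →ₗ[k] C))
    (hfCounit : Coalgebra.counit (R := k) ∘ₗ (f : C →ₗ[k] C) = Coalgebra.counit (R := k) (A := C))
    (heOne : e oneC = oneC) (hfOne : f oneC = oneC)
    (hPrim : primitives k C oneC ≤ LinearMap.ker ((e - f : Module.End k C) : C →ₗ[k] C))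
    (hcomm : f * e = e * f)
 :
    (∀ u : ℕ, 1 < u → Submodule.map (((e - f) ^ (u - 1) : Module.End k C) : C →ₗ[k] C) (F u)
      ≤ primitives k C oneC) ∧
    (∀ u : ℕ, 0 < u → Submodule.map (((e - f) ^ u : Module.End k C) : C →ₗ[k] C) (F u) = ⊥) := by
  set g : Module.End k C := e - f with hg
  set P : Module.End k C := projAug (k := k) oneC with hP
  set G : Module.End k (C ⊗[k] C) := TensorProduct.map g e + TensorProduct.map f g with hG
  have hge : Commute g e := by
    change (e - f) * e = e * (e - f)
    rw [sub_mul, mul_sub, hcomm]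
  have hgf : Commute g f := by
    change (e - f) * f = f * (e - f)
    rw [sub_mul, mul_sub, hcomm]
  have hgOne : g oneC = 0 := by simp [hg, heOne, hfOne]
  have hgCounit : ∀ x, Coalgebra.counit (R := k) (g x) = 0 := by
    intro x
    have h1 := LinearMap.congr_fun heCounit x
    have h2 := LinearMap.congr_fun hfCounit x
    simp only [LinearMap.comp_apply] at h1 h2
    rw [hg, LinearMap.sub_apply, map_sub, h1, h2, sub_self]
  have hP0 : ∀ x ∈ F 0, P x = 0 := by
    intro x hx
    have hinj : (⟨x, hx⟩ : F 0) = Coalgebra.counit (R := k) x • ⟨oneC, hone⟩ :=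
      hconn.1 (by simp [honeCounit])
    have hx' : x = Coalgebra.counit (R := k) x • oneC := congrArg Subtype.val hinj
    exact sub_eq_zero.2 hx'
  have hPF : ∀ n, ∀ x ∈ F n, P x ∈ F n := fun n x hx =>
    (F n).sub_mem hx ((F n).smul_mem _ (hmono (Nat.zero_le n) hone))
  -- A linear map on `C ⊗ C` kills `δ (F n)` as soon as it kills `F i ⊗ F (n - i)` for `0 < i < n`.
  have hred : ∀ (n : ℕ) (T : Module.End k (C ⊗[k] C)),
      (∀ i, 0 < i → i < n → ∀ x ∈ F i, ∀ y ∈ F (n - i), T (x ⊗ₜ[k] y) = 0) →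
      ∀ x ∈ F n, T (TensorProduct.map P P (Coalgebra.comul (R := k) x)) = 0 := by
    intro n T hT x hx
    have hle : ∑ i ∈ Finset.range (n + 1), tmulImage (F i) (F (n - i)) ≤
        LinearMap.ker (T ∘ₗ TensorProduct.map P P) := by
      refine Finset.sum_induction _ (fun S => S ≤ LinearMap.ker (T ∘ₗ TensorProduct.map P P))
        (fun A B hA hB => sup_le hA hB) bot_le ?_
      intro i hi
      have hi' : i ≤ n := by simpa [Nat.lt_succ_iff] using hi
      rw [tmulImage, LinearMap.range_le_ker_iff]
      refine TensorProduct.ext' fun a b => ?_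
      change T (P (a : C) ⊗ₜ[k] P (b : C)) = 0
      rcases Nat.eq_zero_or_pos i with rfl | h0
      · rw [hP0 _ a.2, TensorProduct.zero_tmul, map_zero]
      · rcases hi'.eq_or_lt with rfl | h1
        · have hb : (b : C) ∈ F 0 := by simpa using b.2
          rw [hP0 _ hb, TensorProduct.tmul_zero, map_zero]
        · exact hT i h0 h1 _ (hPF _ _ a.2) _ (hPF _ _ b.2)
    exact hle (hcomulF n (Submodule.mem_map_of_mem hx))
  have hOneComul : Coalgebra.comul (R := k) oneC = oneC ⊗ₜ[k] oneC := by
    have h := hred 0 1 (fun i _ h => absurd h (Nat.not_lt_zero i)) oneC hone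
    rw [Module.End.one_apply, map_projAug_comul, honeCounit, one_smul, sub_add_cancel] at h
    exact sub_eq_zero.1 h
  have hδg : ∀ (m : ℕ) (x : C), TensorProduct.map P P (Coalgebra.comul (R := k) ((g ^ m) x))
      = (G ^ m) (TensorProduct.map P P (Coalgebra.comul (R := k) x)) := by
    have hstep : ∀ x : C, TensorProduct.map P P (Coalgebra.comul (R := k) (g x))
        = G (TensorProduct.map P P (Coalgebra.comul (R := k) x)) := by
      intro x
      have hGe : G = TensorProduct.map e e - TensorProduct.map f f := by
        refine TensorProduct.ext' fun a b => ?_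
        simp [hG, hg, TensorProduct.sub_tmul, TensorProduct.tmul_sub]
      rw [hGe, hg, LinearMap.sub_apply, LinearMap.sub_apply, map_sub, map_sub,
        map_projAug_comul_hom oneC e heComul heCounit heOne,
        map_projAug_comul_hom oneC f hfComul hfCounit hfOne]
    intro m
    induction m with
    | zero => intro x; rfl
    | succ m ih =>
      intro x
      rw [pow_succ, Module.End.mul_apply, ih, hstep, pow_succ, Module.End.mul_apply]
  have hδ : ∀ u : ℕ, (∀ v, 0 < v → v < u → ∀ x ∈ F v, (g ^ v) x = 0) → 0 < u →
      ∀ x ∈ F u, TensorProduct.map P P (Coalgebra.comul (R := k) ((g ^ (u - 1)) x)) = 0 := by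
    intro u ih hu x hx
    rw [hδg]
    refine hred u _ (fun i h0 h1 a ha b hb => ?_) x hx
    exact pow_tensor_eq_zero e f g hge hgf (by omega) (ih i h0 h1 a ha)
      (ih (u - i) (by omega) (by omega) b hb)
  have hb : ∀ u : ℕ, 0 < u → ∀ x ∈ F u, (g ^ u) x = 0 := by
    intro u
    induction u using Nat.strong_induction_on with
    | _ u ih =>
      intro hu x hx
      have h := hδ u (fun v h0 h1 => ih v h1 h0) hu x hx
      set y := (g ^ (u - 1)) x with hy
      have hprim : P y ∈ primitives k C oneC := by
        rw [map_projAug_comul] at h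
        rw [mem_primitives_iff, ← h, hP, projAug_apply, map_sub, map_smul, hOneComul,
          TensorProduct.sub_tmul, TensorProduct.tmul_sub, TensorProduct.smul_tmul',
          TensorProduct.tmul_smul, TensorProduct.smul_tmul']
        abel
      have hgP : g (P y) = 0 := hPrim hprim
      rw [hP, projAug_apply, map_sub, map_smul, hgOne, smul_zero, sub_zero] at hgP
      rw [← Nat.sub_add_cancel hu, pow_succ', Module.End.mul_apply]
      exact hgP
  refine ⟨fun u hu => ?_, fun u hu => ?_⟩
  · rintro _ ⟨x, hx, rfl⟩
    have h := hδ u (fun v h0 _ => hb v h0) (by omega) x hx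
    have hε : Coalgebra.counit (R := k) ((g ^ (u - 1)) x) = 0 := by
      -- `u - 1 > 0`, so the power has `g` as its outermost factor.
      rw [show u - 1 = (u - 2) + 1 by omega, pow_succ', Module.End.mul_apply, hgCounit]
    rw [map_projAug_comul, hε, zero_smul, add_zero] at h
    exact h
  · rw [eq_bot_iff]
    rintro _ ⟨x, hx, rfl⟩
    exact hb u hu x hx
end
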